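/- There exists a function f : [0,1]^2 → ℝ belonging to C^{1,α}([0,1]^2) for every α ∈ (0,1) which does not have the strong Sard property; in fact L¹(f(S)) = 1, where S is the critical set of f. -/

import Mathlib

open MeasureTheory Set

noncomputable section

/-- The unit square `[0,1]²` in the Euclidean plane. -/
def unitSquare : Set (EuclideanSpace ℝ (Fin 2)) := {x | ∀ i, x i ∈ Set.Icc (0:ℝ) 1}

/-- The critical set of `f : [0,1]² → ℝ`: points of the square where `f` is either not
differentiable or has vanishing gradient. -/
def critSet (f : EuclideanSpace ℝ (Fin 2) → ℝ) : Set (EuclideanSpace ℝ (Fin 2)) :=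
  {x | x ∈ unitSquare ∧
    (¬ DifferentiableWithinAt ℝ f unitSquare x ∨ fderivWithin ℝ f unitSquare x = 0)}

/-- `f` is of class `C^{1,α}` on `[0,1]²`: continuously differentiable with gradient
Hölder continuous of exponent `α`. -/
def IsC1Holder (f : EuclideanSpace ℝ (Fin 2) → ℝ) (α : ℝ) : Prop :=
  DifferentiableOn ℝ f unitSquare ∧
  ContinuousOn (fderivWithin ℝ f unitSquare) unitSquare ∧
  ∃ C : ℝ, ∀ x ∈ unitSquare, ∀ y ∈ unitSquare,
    ‖fderivWithin ℝ f unitSquare x - fderivWithin ℝ f unitSquare y‖ ≤ C * dist x y ^ α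

/-!
A Cantor set `{∑ aₖ rₖ}` with gap widths `δₖ` carries a smooth function `∑ wₖ φₖ`, where `φₖ` is
`2 rₖ`-periodic with values in `[0, 1]` and reads off the digit `aₖ`, changing only across gaps.
As `φₖ` is extremal at the Cantor points, all of them are critical. The `k`-th summand has first
and second derivatives of size `wₖ / δₖ` and `wₖ / δₖ²`, hence by interpolation the sum is `C^{1,α}`
as soon as `∑ wₖ δₖ⁻¹⁻ᵅ < ∞`. Splitting base-four digits between two coordinates, weights `wₖ` of
order `4⁻ᵏ` suffice to hit all of `[0, 1)`. If the Cantor set has dimension one, in the sense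
`δₖ = 2 ^ (-k - o(k))`, the series converges for every `α < 1`.
-/

open scoped NNReal

section HolderSeries

variable {ι X E : Type*} [PseudoMetricSpace X] [NormedAddCommGroup E] {α : ℝ≥0}

lemma holderWith_of_dist_le {Y : Type*} [PseudoMetricSpace Y] {f : X → Y} {C : ℝ≥0}
    (h : ∀ x y, dist (f x) (f y) ≤ C * dist x y ^ (α : ℝ)) : HolderWith C α f := fun x y ↦ by
  rw [edist_nndist, edist_nndist, ← ENNReal.coe_rpow_of_nonneg _ α.coe_nonneg]
  exact mod_cast h x y

lemma holderWith_of_lipschitzWith_of_norm_le {f : X → E} {B K : ℝ≥0} (hK : LipschitzWith K f)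
    (hB : ∀ x, ‖f x‖ ≤ B) (hα : α ≤ 1) :
    HolderWith ((2 * B) ^ (1 - α : ℝ) * K ^ (α : ℝ)) α f := by
  have h0 : HolderWith (2 * B) 0 f := holderWith_of_dist_le fun x y ↦ by
    simpa [two_mul] using (dist_le_norm_add_norm _ _).trans (add_le_add (hB x) (hB y))
  have h := h0.interpolate (holderWith_one.mpr hK) (tsub_add_cancel_of_le hα)
  simpa [NNReal.coe_sub hα] using h

lemma holderWith_tsum {f : ι → X → E} {C : ι → ℝ≥0} (hC : Summable C)
    (hf : ∀ i, HolderWith (C i) α (f i)) (hfs : ∀ x, Summable fun i ↦ f i x) :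
    HolderWith (∑' i, C i) α fun x ↦ ∑' i, f i x :=
  holderWith_of_dist_le fun x y ↦ by
    rw [dist_eq_norm, ← (hfs x).tsum_sub (hfs y)]
    refine tsum_of_norm_bounded ((NNReal.hasSum_coe.mpr hC.hasSum).mul_right _) fun i ↦ ?_
    simpa only [dist_eq_norm] using (hf i).dist_le x y

lemma memHolder_finset_sum {Y : Type*} [MetricSpace Y] {f : ι → Y → E} (s : Finset ι)
    (hf : ∀ i ∈ s, MemHolder α (f i)) : MemHolder α (∑ i ∈ s, f i) :=
  Finset.sum_induction f (MemHolder α) (fun _ _ ↦ MemHolder.add) memHolder_zero hf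

variable {𝕜 : Type*} [RCLike 𝕜] [NormedSpace 𝕜 E]

lemma memHolder_deriv_tsum [CompleteSpace E] {u : ι → 𝕜 → E} {b L : ι → ℝ} (hα : α ≤ 1)
    (hu : ∀ i, Differentiable 𝕜 (u i)) (hu' : ∀ i, Differentiable 𝕜 (deriv (u i)))
    (hL : ∀ i, 0 ≤ L i) (hb : ∀ i x, ‖deriv (u i) x‖ ≤ b i)
    (hbL : ∀ i x, ‖deriv (deriv (u i)) x‖ ≤ b i * L i)
    (hsum : Summable b) (hsumα : Summable fun i ↦ b i * L i ^ (α : ℝ))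
    {x₀ : 𝕜} (h₀ : Summable fun i ↦ u i x₀) :
    MemHolder α (deriv fun x ↦ ∑' i, u i x) := by
  lift b to ι → ℝ≥0 using fun i ↦ (norm_nonneg _).trans (hb i 0)
  lift L to ι → ℝ≥0 using hL
  have hlip (i) : LipschitzWith (b i * L i) (deriv (u i)) :=
    lipschitzWith_of_nnnorm_deriv_le (hu' i) fun x ↦ mod_cast hbL i x
  have hconst (i) : (2 * b i) ^ (1 - α : ℝ) * (b i * L i) ^ (α : ℝ) =
      2 ^ (1 - α : ℝ) * (b i * L i ^ (α : ℝ)) := by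
    rw [NNReal.mul_rpow, NNReal.mul_rpow, mul_assoc, ← mul_assoc (b i ^ _),
      ← NNReal.rpow_add_of_nonneg _ (sub_nonneg.mpr (NNReal.coe_le_one.mpr hα)) α.coe_nonneg,
      sub_add_cancel, NNReal.rpow_one]
  have hsumC : Summable fun i ↦ (2 * b i) ^ (1 - α : ℝ) * (b i * L i) ^ (α : ℝ) := by
    simp only [hconst]
    exact (NNReal.summable_coe.mp (by simpa using hsumα)).mul_left _
  rw [deriv_tsum hsum hu hb h₀]
  exact (holderWith_tsum hsumC (fun i ↦ holderWith_of_lipschitzWith_of_norm_le (hlip i) (hb i) hα)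
    fun x ↦ hsum.of_norm_bounded (hb · x)).memHolder

end HolderSeries

section Derivatives

lemma deriv_eq_zero_of_mem_endpoints {f : ℝ → ℝ} {a b x : ℝ} (hf : ∀ y, f y ∈ Icc a b)
    (h : f x = a ∨ f x = b) : deriv f x = 0 := by
  rcases h with h | h
  · exact IsLocalMin.deriv_eq_zero (.of_forall fun y ↦ h ▸ (hf y).1)
  · exact IsLocalMax.deriv_eq_zero (.of_forall fun y ↦ h ▸ (hf y).2)

variable {𝕜 : Type*} [NontriviallyNormedField 𝕜] {g f : 𝕜 → 𝕜}

lemma norm_deriv_comp_le {M L : ℝ} (hg : Differentiable 𝕜 g) (hf : Differentiable 𝕜 f)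
    (hM : ∀ y, ‖deriv g y‖ ≤ M) (hL : ∀ x, ‖deriv f x‖ ≤ L) (x : 𝕜) :
    ‖deriv (g ∘ f) x‖ ≤ M * L := by
  rw [deriv_comp x (hg _) (hf x), norm_mul]
  exact mul_le_mul (hM _) (hL x) (norm_nonneg _) ((norm_nonneg _).trans (hM 0))

lemma deriv_deriv_comp (hg : ContDiff 𝕜 2 g) (hf : ContDiff 𝕜 2 f) (x : 𝕜) :
    deriv (deriv (g ∘ f)) x =
      deriv (deriv g) (f x) * deriv f x ^ 2 + deriv g (f x) * deriv (deriv f) x := by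
  have hg₁ := hg.differentiable two_ne_zero
  have hf₁ := hf.differentiable two_ne_zero
  have hg₂ := hg.differentiable_deriv_two (f x)
  have hcomp : deriv (g ∘ f) = (deriv g ∘ f) * deriv f :=
    funext fun y ↦ deriv_comp y (hg₁ _) (hf₁ y)
  rw [hcomp, deriv_mul (hg₂.comp x (hf₁ x)) (hf.differentiable_deriv_two x),
    deriv_comp x hg₂ (hf₁ x), Function.comp_apply]
  ring

end Derivatives

section Switch

open Real

lemma hasCompactSupport_deriv_smoothTransition : HasCompactSupport (deriv smoothTransition) := by
  refine .intro (isCompact_Icc (a := (0 : ℝ)) (b := 1)) fun x hx ↦ deriv_eq_zero_of_mem_endpoints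
    (fun y ↦ ⟨smoothTransition.nonneg y, smoothTransition.le_one y⟩) ?_
  rw [smoothTransition.zero_iff_nonpos, smoothTransition.eq_one_iff_one_le]
  by_contra! h
  exact hx ⟨h.1.le, h.2.le⟩

/-- The argument of the sine in `switchWave`: multiples of `π` sit in the middle of the gaps
`(k * r - δ, k * r)`. -/
def switchPhase (r δ x : ℝ) : ℝ := π / r * (x + δ / 2)

/-- A sine wave of period `2 * r` around `1 / 2`. The amplitude is chosen so that away from the
gaps `(k * r - δ, k * r)` its values avoid the interval `(0, 1)`. -/
def switchWave (r δ x : ℝ) : ℝ := 1 / 2 - r / (2 * δ) * sin (switchPhase r δ x)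

/-- A smooth `2 * r`-periodic switch: modulo the period it is `0` on `[0, r - δ]` and `1` on
`[r, 2 * r - δ]`, so it reads off one binary digit. -/
def periodicSwitch (r δ : ℝ) : ℝ → ℝ := smoothTransition ∘ switchWave r δ

variable {r δ : ℝ}

lemma hasDerivAt_switchPhase (x : ℝ) : HasDerivAt (switchPhase r δ) (π / r) x :=
  (((hasDerivAt_id' x).add_const (δ / 2)).const_mul (π / r)).congr_deriv (mul_one _)

lemma deriv_switchWave (hr : r ≠ 0) (x : ℝ) :
    deriv (switchWave r δ) x = -(π / (2 * δ)) * cos (switchPhase r δ x) := by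
  refine HasDerivAt.deriv <|
    (((hasDerivAt_switchPhase x).sin.const_mul (r / (2 * δ))).const_sub (1 / 2)).congr_deriv ?_
  field_simp

lemma deriv_deriv_switchWave (hr : r ≠ 0) (x : ℝ) :
    deriv (deriv (switchWave r δ)) x = π ^ 2 / (2 * δ * r) * sin (switchPhase r δ x) := by
  rw [funext (deriv_switchWave hr), ((hasDerivAt_switchPhase x).cos.const_mul _).deriv]
  ring

lemma contDiff_switchWave {n : WithTop ℕ∞} : ContDiff ℝ n (switchWave r δ) := by
  unfold switchWave switchPhase
  fun_prop

lemma contDiff_periodicSwitch {n : ℕ∞} : ContDiff ℝ n (periodicSwitch r δ) :=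
  smoothTransition.contDiff.comp contDiff_switchWave

lemma abs_deriv_switchWave_le (hδ : 0 < δ) (hr : r ≠ 0) (x : ℝ) :
    |deriv (switchWave r δ) x| ≤ 2 * δ⁻¹ := by
  rw [deriv_switchWave hr, abs_mul, abs_neg, abs_of_pos (by positivity)]
  calc π / (2 * δ) * |cos (switchPhase r δ x)|
      ≤ 4 / (2 * δ) * 1 := by
        gcongr
        exacts [pi_le_four, abs_cos_le_one _]
    _ = 2 * δ⁻¹ := by field_simp; norm_num

lemma abs_deriv_deriv_switchWave_le (hδ : 0 < δ) (hδr : δ ≤ r) (x : ℝ) :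
    |deriv (deriv (switchWave r δ)) x| ≤ 8 * δ⁻¹ ^ 2 := by
  have hr := hδ.trans_le hδr
  rw [deriv_deriv_switchWave hr.ne', abs_mul, abs_of_pos (by positivity)]
  calc π ^ 2 / (2 * δ * r) * |sin (switchPhase r δ x)|
      ≤ 4 ^ 2 / (2 * δ * δ) * 1 := by
        gcongr
        exacts [pi_le_four, abs_sin_le_one _]
    _ = 8 * δ⁻¹ ^ 2 := by field_simp; norm_num

lemma exists_abs_deriv_periodicSwitch_le :
    ∃ A : ℝ, ∀ r δ : ℝ, 0 < δ → δ ≤ r → ∀ x, |deriv (periodicSwitch r δ) x| ≤ A * δ⁻¹ ∧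
      |deriv (deriv (periodicSwitch r δ)) x| ≤ A * δ⁻¹ * δ⁻¹ := by
  have hT : ContDiff ℝ 2 smoothTransition := smoothTransition.contDiff
  have hsupp := hasCompactSupport_deriv_smoothTransition
  obtain ⟨M₁, hM₁⟩ := hsupp.exists_bound_of_continuous (hT.continuous_deriv one_le_two)
  obtain ⟨M₂, hM₂⟩ := hsupp.deriv.exists_bound_of_continuous hT.deriv'.continuous_deriv_one
  have hM₁0 := (norm_nonneg _).trans (hM₁ 0)
  have hM₂0 := (norm_nonneg _).trans (hM₂ 0)
  simp only [Real.norm_eq_abs] at hM₁ hM₂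
  refine ⟨8 * M₁ + 4 * M₂, fun r δ hδ hδr x ↦ ?_⟩
  have hw₁ := abs_deriv_switchWave_le hδ (hδ.trans_le hδr).ne'
  have hw₂ := abs_deriv_deriv_switchWave_le hδ hδr
  constructor
  · refine (norm_deriv_comp_le (hT.differentiable two_ne_zero)
      (contDiff_switchWave.differentiable two_ne_zero) hM₁ hw₁ x).trans ?_
    rw [← mul_assoc]
    gcongr
    linarith
  · rw [periodicSwitch, deriv_deriv_comp hT contDiff_switchWave]
    calc |_ + _| ≤ M₂ * (2 * δ⁻¹) ^ 2 + M₁ * (8 * δ⁻¹ ^ 2) := by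
          refine (abs_add_le _ _).trans ?_
          rw [abs_mul, abs_mul, abs_pow]
          gcongr
          exacts [hM₂ _, hw₁ x, hM₁ _, hw₂ x]
      _ = (8 * M₁ + 4 * M₂) * δ⁻¹ * δ⁻¹ := by ring

lemma periodicSwitch_mem_Icc (x : ℝ) : periodicSwitch r δ x ∈ Icc 0 1 :=
  ⟨smoothTransition.nonneg _, smoothTransition.le_one _⟩

lemma div_le_sin_switchPhase {w : ℝ} (hδ : 0 < δ) (hw : w ∈ Icc 0 (r - δ)) :
    δ / r ≤ sin (switchPhase r δ w) := by
  have hr : 0 < r := by linarith [hw.1, hw.2]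
  have jordan {v : ℝ} (hv : δ / 2 ≤ v) (hv' : v ≤ r / 2) : δ / r ≤ sin (π / r * v) :=
    calc δ / r ≤ 2 / π * (π / r * v) := by field_simp; linarith
      _ ≤ sin (π / r * v) := by
        have : 0 ≤ v := by linarith
        refine mul_le_sin (by positivity) ?_
        calc π / r * v ≤ π / r * (r / 2) := by gcongr
          _ = π / 2 := by field_simp
  rcases le_total (w + δ / 2) (r / 2) with h | h
  · exact jordan (by linarith [hw.1]) h
  · have hreflect : π / r * (r - (w + δ / 2)) = π - switchPhase r δ w := by
      unfold switchPhase
      field_simp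
    rw [← sin_pi_sub, ← hreflect]
    exact jordan (by linarith [hw.2]) (by linarith)

lemma periodicSwitch_eq_digit {w : ℝ} (hδ : 0 < δ) (hw : w ∈ Icc 0 (r - δ)) (a : Fin 2)
    (m : ℕ) : periodicSwitch r δ (2 * r * m + (a : ℕ) * r + w) = (a : ℕ) := by
  have hr : 0 < r := by linarith [hw.1, hw.2]
  have hphase : switchPhase r δ (2 * r * m + (a : ℕ) * r + w) =
      switchPhase r δ w + (a : ℕ) * π + m * (2 * π) := by
    unfold switchPhase
    field_simp
    ring
  have hsin : 1 / 2 ≤ r / (2 * δ) * sin (switchPhase r δ w) :=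
    calc 1 / 2 = r / (2 * δ) * (δ / r) := by field_simp
      _ ≤ _ := by gcongr; exact div_le_sin_switchPhase hδ hw
  rw [periodicSwitch, Function.comp_apply, switchWave, hphase, sin_add_nat_mul_two_pi]
  fin_cases a
  · simpa using smoothTransition.zero_of_nonpos (sub_nonpos.mpr hsin)
  · have : 1 ≤ 1 / 2 - r / (2 * δ) * -sin (switchPhase r δ w) := by linarith
    simpa [sin_add_pi] using smoothTransition.one_of_one_le this

end Switch

section CantorSet

variable {r δ : ℕ → ℝ}

/-- Admissible data for a Cantor set `{∑ aₖ * r k | aₖ ∈ {0, 1}}`: a stage-`k` interval has length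
`r k - δ k`, and the left endpoints of its two sibling copies differ by `r k`, leaving a gap of
width `δ k`. The condition `even_ratio` makes the digits before `n` invisible to a function of
period `2 * r n`. -/
structure IsCantorScale (r δ : ℕ → ℝ) : Prop where
  gap_pos : ∀ k, 0 < δ k
  gap_le : ∀ k, δ k ≤ r k
  nested : ∀ k, r (k + 1) + (r (k + 1) - δ (k + 1)) ≤ r k - δ k
  even_ratio : ∀ k, ∃ m : ℕ, r k = 2 * m * r (k + 1)

/-- The point of the Cantor set of scale `r` with binary digits `a`. -/
def cantorPoint (r : ℕ → ℝ) (a : ℕ → Fin 2) : ℝ := ∑' k, ((a k : ℕ) : ℝ) * r k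

namespace IsCantorScale

lemma scale_pos (h : IsCantorScale r δ) (k : ℕ) : 0 < r k := (h.gap_pos k).trans_le (h.gap_le k)

lemma sum_range_le (h : IsCantorScale r δ) (n m : ℕ) :
    ∑ j ∈ Finset.range m, r (j + (n + 1)) ≤ r n - δ n := by
  have telescope (m : ℕ) :
      ∑ j ∈ Finset.range m, r (j + (n + 1)) + (r (m + n) - δ (m + n)) ≤ r n - δ n := by
    induction m with
    | zero => simp
    | succ m ih =>
      rw [Finset.sum_range_succ, ← add_assoc, add_right_comm m 1 n]
      linarith [h.nested (m + n)]
  linarith [telescope m, h.gap_le (m + n)]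

lemma summable (h : IsCantorScale r δ) : Summable r :=
  (summable_nat_add_iff 1).mp <|
    summable_of_sum_range_le (fun _ ↦ (h.scale_pos _).le) (h.sum_range_le 0)

lemma digit_mul_mem_Icc (h : IsCantorScale r δ) (a : ℕ → Fin 2) (k : ℕ) :
    ((a k : ℕ) : ℝ) * r k ∈ Icc 0 (r k) :=
  ⟨mul_nonneg (Nat.cast_nonneg _) (h.scale_pos k).le,
    mul_le_of_le_one_left (h.scale_pos k).le (mod_cast (a k).is_le)⟩

lemma summable_digit_mul (h : IsCantorScale r δ) (a : ℕ → Fin 2) :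
    Summable fun k ↦ ((a k : ℕ) : ℝ) * r k :=
  .of_nonneg_of_le (fun k ↦ (h.digit_mul_mem_Icc a k).1) (fun k ↦ (h.digit_mul_mem_Icc a k).2)
    h.summable

lemma tail_mem_Icc (h : IsCantorScale r δ) (a : ℕ → Fin 2) (n : ℕ) :
    ∑' j, ((a (j + (n + 1)) : ℕ) : ℝ) * r (j + (n + 1)) ∈ Icc 0 (r n - δ n) := by
  have hmem (j : ℕ) := h.digit_mul_mem_Icc a (j + (n + 1))
  exact ⟨tsum_nonneg fun j ↦ (hmem j).1, Real.tsum_le_of_sum_range_le (fun j ↦ (hmem j).1) fun m ↦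
    (Finset.sum_le_sum fun j _ ↦ (hmem j).2).trans (h.sum_range_le n m)⟩

lemma exists_sum_range_eq (h : IsCantorScale r δ) (a : ℕ → Fin 2) (n : ℕ) :
    ∃ m : ℕ, ∑ j ∈ Finset.range n, ((a j : ℕ) : ℝ) * r j = 2 * r n * m := by
  induction n with
  | zero => exact ⟨0, by simp⟩
  | succ n ih =>
    obtain ⟨m, hm⟩ := ih
    obtain ⟨c, hc⟩ := h.even_ratio n
    refine ⟨c * (2 * m + a n), ?_⟩
    rw [Finset.sum_range_succ, hm, hc]
    push_cast
    ring

lemma exists_cantorPoint_eq (h : IsCantorScale r δ) (a : ℕ → Fin 2) (n : ℕ) :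
    ∃ m : ℕ, ∃ w ∈ Icc 0 (r n - δ n), cantorPoint r a = 2 * r n * m + (a n : ℕ) * r n + w := by
  obtain ⟨m, hm⟩ := h.exists_sum_range_eq a n
  refine ⟨m, _, h.tail_mem_Icc a n, ?_⟩
  rw [← hm, ← Finset.sum_range_succ, (h.summable_digit_mul a).sum_add_tsum_nat_add, cantorPoint]

lemma periodicSwitch_cantorPoint (h : IsCantorScale r δ) (a : ℕ → Fin 2) (n : ℕ) :
    periodicSwitch (r n) (δ n) (cantorPoint r a) = (a n : ℕ) := by
  obtain ⟨m, w, hw, heq⟩ := h.exists_cantorPoint_eq a n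
  rw [heq, periodicSwitch_eq_digit (h.gap_pos n) hw]

lemma cantorPoint_mem_Icc (h : IsCantorScale r δ) (a : ℕ → Fin 2) :
    cantorPoint r a ∈ Icc 0 (2 * r 0 - δ 0) := by
  have htail := h.tail_mem_Icc a 0
  have hhead := h.digit_mul_mem_Icc a 0
  rw [cantorPoint, ← (h.summable_digit_mul a).sum_add_tsum_nat_add 1, Finset.sum_range_one]
  exact ⟨add_nonneg hhead.1 htail.1, (add_le_add hhead.2 htail.2).trans_eq (by ring)⟩

end IsCantorScale

end CantorSet

section SwitchSeries

variable {w r δ : ℕ → ℝ}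

/-- The function of one variable whose value at a Cantor point is the `w`-weighted sum of its
digits. -/
def switchSeries (w r δ : ℕ → ℝ) (x : ℝ) : ℝ := ∑' k, w k * periodicSwitch (r k) (δ k) x

lemma summable_mul_periodicSwitch (hw : ∀ k, 0 ≤ w k) (hsum : Summable w) (x : ℝ) :
    Summable fun k ↦ w k * periodicSwitch (r k) (δ k) x :=
  .of_nonneg_of_le (fun k ↦ mul_nonneg (hw k) (periodicSwitch_mem_Icc x).1)
    (fun k ↦ mul_le_of_le_one_right (hw k) (periodicSwitch_mem_Icc x).2) hsum

lemma switchSeries_mem_Icc (hw : ∀ k, 0 ≤ w k) (hsum : Summable w) (x : ℝ) :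
    switchSeries w r δ x ∈ Icc 0 (∑' k, w k) :=
  ⟨tsum_nonneg fun k ↦ mul_nonneg (hw k) (periodicSwitch_mem_Icc x).1,
    (summable_mul_periodicSwitch hw hsum x).tsum_le_tsum
      (fun k ↦ mul_le_of_le_one_right (hw k) (periodicSwitch_mem_Icc x).2) hsum⟩

lemma exists_abs_deriv_mul_periodicSwitch_le (hw : ∀ k, 0 ≤ w k) (hδ : ∀ k, 0 < δ k)
    (hδr : ∀ k, δ k ≤ r k) : ∃ A : ℝ, ∀ k x,
      ‖deriv (fun y ↦ w k * periodicSwitch (r k) (δ k) y) x‖ ≤ A * (w k * (δ k)⁻¹) ∧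
      ‖deriv (deriv fun y ↦ w k * periodicSwitch (r k) (δ k) y) x‖ ≤
        A * (w k * (δ k)⁻¹) * (δ k)⁻¹ := by
  obtain ⟨A, hA⟩ := exists_abs_deriv_periodicSwitch_le
  refine ⟨A, fun k x ↦ ?_⟩
  obtain ⟨h₁, h₂⟩ := hA (r k) (δ k) (hδ k) (hδr k) x
  simp only [deriv_const_mul_field', norm_mul, Real.norm_eq_abs, abs_of_nonneg (hw k)]
  constructor
  · calc w k * _ ≤ w k * (A * (δ k)⁻¹) := mul_le_mul_of_nonneg_left h₁ (hw k)
      _ = _ := by ring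
  · calc w k * _ ≤ w k * (A * (δ k)⁻¹ * (δ k)⁻¹) := mul_le_mul_of_nonneg_left h₂ (hw k)
      _ = _ := by ring

lemma differentiable_mul_periodicSwitch (k : ℕ) :
    Differentiable ℝ fun x ↦ w k * periodicSwitch (r k) (δ k) x :=
  (contDiff_periodicSwitch.differentiable two_ne_zero).const_mul _

lemma hasDerivAt_switchSeries (hw : ∀ k, 0 ≤ w k) (hδ : ∀ k, 0 < δ k) (hδr : ∀ k, δ k ≤ r k)
    (hsum : Summable w) (hsumδ : Summable fun k ↦ w k * (δ k)⁻¹) (x : ℝ) :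
    HasDerivAt (switchSeries w r δ) (∑' k, w k * deriv (periodicSwitch (r k) (δ k)) x) x := by
  obtain ⟨A, hA⟩ := exists_abs_deriv_mul_periodicSwitch_le hw hδ hδr
  unfold switchSeries
  simpa only [deriv_const_mul_field] using hasDerivAt_tsum (hsumδ.mul_left A)
    (fun k y ↦ (differentiable_mul_periodicSwitch k y).hasDerivAt)
    (fun k y ↦ (hA k y).1) (summable_mul_periodicSwitch hw hsum 0) x

lemma memHolder_deriv_switchSeries (hw : ∀ k, 0 ≤ w k) (hδ : ∀ k, 0 < δ k)
    (hδr : ∀ k, δ k ≤ r k) (hsum : Summable w) (hsumδ : Summable fun k ↦ w k * (δ k)⁻¹)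
    {α : ℝ≥0} (hα : α ≤ 1) (hsumα : Summable fun k ↦ w k * (δ k)⁻¹ * (δ k)⁻¹ ^ (α : ℝ)) :
    MemHolder α (deriv (switchSeries w r δ)) := by
  obtain ⟨A, hA⟩ := exists_abs_deriv_mul_periodicSwitch_le hw hδ hδr
  refine memHolder_deriv_tsum hα differentiable_mul_periodicSwitch (fun k ↦ ?_)
    (fun k ↦ (inv_pos.mpr (hδ k)).le) (fun k x ↦ (hA k x).1) (fun k x ↦ (hA k x).2)
    (hsumδ.mul_left A) ?_ (summable_mul_periodicSwitch hw hsum 0)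
  · exact (contDiff_const.mul contDiff_periodicSwitch).differentiable_deriv_two
  · simpa only [mul_assoc] using hsumα.mul_left A

lemma IsCantorScale.switchSeries_cantorPoint (h : IsCantorScale r δ) (a : ℕ → Fin 2) :
    switchSeries w r δ (cantorPoint r a) = ∑' k, w k * (a k : ℕ) := by
  simp only [switchSeries, h.periodicSwitch_cantorPoint]

lemma IsCantorScale.deriv_periodicSwitch_cantorPoint (h : IsCantorScale r δ) (a : ℕ → Fin 2)
    (n : ℕ) : deriv (periodicSwitch (r n) (δ n)) (cantorPoint r a) = 0 := by
  refine deriv_eq_zero_of_mem_endpoints periodicSwitch_mem_Icc ?_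
  rw [h.periodicSwitch_cantorPoint]
  exact mod_cast (by lia : (a n : ℕ) = 0 ∨ (a n : ℕ) = 1)

lemma IsCantorScale.deriv_switchSeries_cantorPoint (h : IsCantorScale r δ) (hw : ∀ k, 0 ≤ w k)
    (hsum : Summable w) (hsumδ : Summable fun k ↦ w k * (δ k)⁻¹) (a : ℕ → Fin 2) :
    deriv (switchSeries w r δ) (cantorPoint r a) = 0 := by
  rw [(hasDerivAt_switchSeries hw h.gap_pos h.gap_le hsum hsumδ _).deriv]
  simp only [h.deriv_periodicSwitch_cantorPoint, mul_zero, tsum_zero]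

end SwitchSeries

section DigitScale

lemma sqrt_succ_eq_or_succ_eq_sq (k : ℕ) :
    Nat.sqrt (k + 1) = Nat.sqrt k ∨ k + 1 = (Nat.sqrt k + 1) ^ 2 := by
  rcases (Nat.succ_le_of_lt (Nat.lt_succ_sqrt' k)).lt_or_eq with h | h
  · exact .inl (Nat.eq_sqrt'.mpr ⟨(Nat.sqrt_le' k).trans k.le_succ, h⟩).symm
  · exact .inr h

/-- The scale of a Cantor set of dimension one: `2 ^ (-k)` up to the factor `2 ^ (-√k - 1)`, whose
exponent jumps at the perfect squares only. -/
def cantorSpacing (k : ℕ) : ℝ := 2⁻¹ ^ (k + Nat.sqrt k + 1)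

/-- The gap widths for `cantorSpacing`, constant between consecutive perfect squares: at a square
the scale drops by `4` instead of `2`, and the length this frees is distributed over the stages of
the preceding block. -/
def cantorGap (k : ℕ) : ℝ := 2 * cantorSpacing ((Nat.sqrt k + 1) ^ 2)

lemma cantorGap_pos (k : ℕ) : 0 < cantorGap k := by
  unfold cantorGap cantorSpacing
  positivity

lemma cantorGap_eq_pow (k : ℕ) : cantorGap k = 2⁻¹ ^ ((Nat.sqrt k + 1) ^ 2 + Nat.sqrt k + 1) := by
  rw [cantorGap, cantorSpacing, Nat.sqrt_eq', pow_succ, ← add_assoc]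
  ring

lemma cantorSpacing_succ_and_cantorGap_succ (k : ℕ) :
    cantorSpacing k = 2 * cantorSpacing (k + 1) ∧ cantorGap (k + 1) = cantorGap k ∨
      cantorSpacing k = 4 * cantorSpacing (k + 1) ∧ cantorGap k = 2 * cantorSpacing (k + 1) := by
  rcases sqrt_succ_eq_or_succ_eq_sq k with h | h
  · refine .inl ⟨?_, by rw [cantorGap, cantorGap, h]⟩
    rw [cantorSpacing, cantorSpacing, h]
    ring
  · refine .inr ⟨?_, by rw [cantorGap, h]⟩
    have hsqrt : Nat.sqrt (k + 1) = Nat.sqrt k + 1 := by rw [h, Nat.sqrt_eq']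
    rw [cantorSpacing, cantorSpacing, hsqrt]
    ring

lemma isCantorScale_cantorSpacing : IsCantorScale cantorSpacing cantorGap where
  gap_pos := cantorGap_pos
  gap_le k := by
    rw [cantorGap_eq_pow, cantorSpacing]
    refine pow_le_pow_of_le_one (by norm_num) (by norm_num) ?_
    linarith [Nat.lt_succ_sqrt' k]
  nested k := by
    have := cantorGap_pos (k + 1)
    rcases cantorSpacing_succ_and_cantorGap_succ k with ⟨hs, hg⟩ | ⟨hs, hg⟩ <;> linarith
  even_ratio k := by
    rcases cantorSpacing_succ_and_cantorGap_succ k with ⟨hs, -⟩ | ⟨hs, -⟩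
    · exact ⟨1, by rw [hs]; norm_num⟩
    · exact ⟨2, by rw [hs]; norm_num⟩

lemma cantorPoint_cantorSpacing_mem_Icc (a : ℕ → Fin 2) :
    cantorPoint cantorSpacing a ∈ Icc 0 1 := by
  refine Icc_subset_Icc_right ?_ (isCantorScale_cantorSpacing.cantorPoint_mem_Icc a)
  have : cantorSpacing 0 = 2⁻¹ := by simp [cantorSpacing]
  linarith [cantorGap_pos 0]

lemma inv_cantorGap_le (k : ℕ) : (cantorGap k)⁻¹ ≤ 2 ^ (k + 3 * √k + 2) := by
  have hs : (Nat.sqrt k : ℝ) ≤ √k := Real.nat_sqrt_le_real_sqrt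
  have hs2 : (Nat.sqrt k : ℝ) ^ 2 ≤ k := mod_cast Nat.sqrt_le' k
  rw [cantorGap_eq_pow, inv_pow, inv_inv, ← Real.rpow_natCast]
  refine Real.rpow_le_rpow_of_exponent_le one_le_two ?_
  push_cast
  linarith

lemma summable_rpow_mul_sqrt_sub_mul {b c β : ℝ} (hb : 1 < b) (hβ : 0 < β) :
    Summable fun k : ℕ ↦ b ^ (c * √k - β * k) := by
  have hb0 : 0 < b := one_pos.trans hb
  have hgeom : Summable fun k : ℕ ↦ b ^ (c ^ 2 / (2 * β)) * (b ^ (-(β / 2))) ^ k :=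
    (summable_geometric_of_lt_one (by positivity)
      (Real.rpow_lt_one_of_one_lt_of_neg hb (by linarith))).mul_left _
  refine .of_nonneg_of_le (fun k ↦ by positivity) (fun k ↦ ?_) hgeom
  rw [← Real.rpow_mul_natCast hb0.le, ← Real.rpow_add hb0]
  refine Real.rpow_le_rpow_of_exponent_le hb.le ?_
  have hamgm : c * √k ≤ c ^ 2 / (2 * β) + β / 2 * k := by
    rw [← sub_nonneg]
    calc 0 ≤ (β * √k - c) ^ 2 / (2 * β) := by positivity
      _ = _ := by
        rw [sub_sq, mul_pow, Real.sq_sqrt k.cast_nonneg]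
        field_simp
        ring
  linarith

/-- The weight of the `k`-th binary digit of the `i`-th coordinate: a base-four digit is
`a + 2 * b` with `a` read from the first coordinate and `b` from the second. -/
def digitWeight (i : Fin 2) (k : ℕ) : ℝ := 2 ^ (i : ℕ) * (4 ^ (k + 1))⁻¹

lemma digitWeight_nonneg (i : Fin 2) (k : ℕ) : 0 ≤ digitWeight i k := by
  unfold digitWeight
  positivity

lemma hasSum_digitWeight (i : Fin 2) : HasSum (digitWeight i) (2 ^ (i : ℕ) / 3) := by
  have hgeom : digitWeight i = fun k ↦ 2 ^ (i : ℕ) * 4⁻¹ * 4⁻¹ ^ k := funext fun k ↦ by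
    rw [digitWeight, pow_succ, mul_inv, inv_pow]
    ring
  rw [hgeom, show (2 ^ (i : ℕ) / 3 : ℝ) = 2 ^ (i : ℕ) * 4⁻¹ * (1 - 4⁻¹)⁻¹ by ring]
  exact (hasSum_geometric_of_lt_one (by norm_num) (by norm_num)).mul_left _

lemma summable_digitWeight_mul_inv_cantorGap_rpow (i : Fin 2) {α : ℝ} (h0 : 0 ≤ α) (h1 : α < 1) :
    Summable fun k ↦ digitWeight i k * (cantorGap k)⁻¹ * (cantorGap k)⁻¹ ^ α := by
  have hsum : Summable fun k : ℕ ↦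
      2 ^ (i : ℕ) * (2 ^ (2 * α) * 2 ^ (3 * (1 + α) * √k - (1 - α) * k) : ℝ) :=
    ((summable_rpow_mul_sqrt_sub_mul one_lt_two (by linarith)).mul_left _).mul_left _
  have hgap (k : ℕ) : 0 < (cantorGap k)⁻¹ := inv_pos.mpr (cantorGap_pos k)
  refine .of_nonneg_of_le (fun k ↦ ?_) (fun k ↦ ?_) hsum
  · have := digitWeight_nonneg i k
    have := hgap k
    positivity
  · have hfour : ((4 : ℝ) ^ (k + 1))⁻¹ = 2 ^ (-2 * (k + 1 : ℝ)) := by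
      rw [Real.rpow_mul zero_le_two, Real.rpow_neg zero_le_two, Real.inv_rpow (by positivity)]
      norm_num [← Real.rpow_natCast]
    calc digitWeight i k * (cantorGap k)⁻¹ * (cantorGap k)⁻¹ ^ α
        = 2 ^ (i : ℕ) * (2 ^ (-2 * (k + 1 : ℝ)) * (cantorGap k)⁻¹ ^ (1 + α)) := by
          rw [Real.rpow_one_add' (hgap k).le (by linarith), digitWeight, hfour]
          ring
      _ ≤ 2 ^ (i : ℕ) * (2 ^ (-2 * (k + 1 : ℝ)) * (2 ^ (k + 3 * √k + 2)) ^ (1 + α)) := by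
          gcongr
          · exact (hgap k).le
          · exact inv_cantorGap_le k
      _ = 2 ^ (i : ℕ) * (2 ^ (2 * α) * 2 ^ (3 * (1 + α) * √k - (1 - α) * k)) := by
          rw [← Real.rpow_mul zero_le_two, ← Real.rpow_add two_pos, ← Real.rpow_add two_pos]
          ring_nf

lemma summable_digitWeight_mul_inv_cantorGap (i : Fin 2) :
    Summable fun k ↦ digitWeight i k * (cantorGap k)⁻¹ := by
  simpa using summable_digitWeight_mul_inv_cantorGap_rpow i le_rfl one_pos

lemma exists_digits_tsum_eq {t : ℝ} (ht : t ∈ Ico 0 1) :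
    ∃ a : Fin 2 → ℕ → Fin 2, ∑ i, ∑' k, digitWeight i k * (a i k : ℕ) = t := by
  let d : ℕ → Fin (2 * 2) := Real.digits t (2 * 2)
  let a : Fin 2 → ℕ → Fin 2 := ![fun k ↦ (d k).modNat, fun k ↦ (d k).divNat]
  have hsummable (i : Fin 2) : Summable fun k ↦ digitWeight i k * (a i k : ℕ) :=
    .of_nonneg_of_le (fun k ↦ mul_nonneg (digitWeight_nonneg i k) (Nat.cast_nonneg _))
      (fun k ↦ mul_le_of_le_one_right (digitWeight_nonneg i k) (mod_cast (a i k).is_le))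
      (hasSum_digitWeight i).summable
  have hdigit (k : ℕ) :
      ∑ i, digitWeight i k * (a i k : ℕ) = Real.ofDigitsTerm d k := by
    have hd : ((d k : ℕ) : ℝ) = ((d k).modNat : ℕ) + 2 * ((d k).divNat : ℕ) := by
      exact_mod_cast (Nat.mod_add_div (d k) 2).symm
    rw [Real.ofDigitsTerm, hd, Fin.sum_univ_two]
    simp only [a, digitWeight, Matrix.cons_val_zero, Matrix.cons_val_one, Fin.val_zero,
      Fin.val_one, Nat.cast_mul, Nat.cast_ofNat]
    ring
  refine ⟨a, (hasSum_sum fun i _ ↦ (hsummable i).hasSum).unique ?_⟩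
  simp only [hdigit]
  exact Real.hasSum_ofDigitsTerm_digits t (by norm_num) ht

end DigitScale

section SeparableFunction

variable {ι 𝕜 : Type*} [Fintype ι] [RCLike 𝕜] {h : ι → 𝕜 → 𝕜}

lemma hasFDerivAt_sum_apply {x : EuclideanSpace 𝕜 ι}
    (hh : ∀ i, DifferentiableAt 𝕜 (h i) (x i)) :
    HasFDerivAt (fun y : EuclideanSpace 𝕜 ι ↦ ∑ i, h i (y i))
      (∑ i, deriv (h i) (x i) • EuclideanSpace.proj (𝕜 := 𝕜) i) x :=
  .fun_sum fun i _ ↦ (hh i).hasDerivAt.comp_hasFDerivAt (f := fun y : EuclideanSpace 𝕜 ι ↦ y i) x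
    (EuclideanSpace.proj (𝕜 := 𝕜) i).hasFDerivAt

lemma memHolder_fderiv_sum_apply {α : ℝ≥0} (hh : ∀ i, Differentiable 𝕜 (h i))
    (hα : ∀ i, MemHolder α (deriv (h i))) :
    MemHolder α (fderiv 𝕜 fun y : EuclideanSpace 𝕜 ι ↦ ∑ i, h i (y i)) := by
  let p (i : ι) : EuclideanSpace 𝕜 ι →L[𝕜] 𝕜 := EuclideanSpace.proj i
  have hfderiv : (fderiv 𝕜 fun y : EuclideanSpace 𝕜 ι ↦ ∑ i, h i (y i)) =
      ∑ i, fun y ↦ deriv (h i) (y i) • p i := by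
    ext1 y
    rw [(hasFDerivAt_sum_apply fun i ↦ hh i (y i)).fderiv, Finset.sum_apply]
  rw [hfderiv]
  refine memHolder_finset_sum _ fun i _ ↦ ?_
  have h := ((p i).lipschitz.holderWith.memHolder.comp (hα i)).comp
    (ContinuousLinearMap.toSpanSingleton 𝕜 (p i)).lipschitz.holderWith.memHolder
  rw [one_mul, mul_one] at h
  exact h

end SeparableFunction

section UnitSquare

variable {f : EuclideanSpace ℝ (Fin 2) → ℝ}

lemma uniqueDiffOn_unitSquare : UniqueDiffOn ℝ unitSquare := by
  have hpre : unitSquare = EuclideanSpace.equiv (Fin 2) ℝ ⁻¹' univ.pi fun _ ↦ Icc 0 1 :=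
    Set.ext fun x ↦ mem_univ_pi.symm
  rw [hpre, ContinuousLinearEquiv.uniqueDiffOn_preimage_iff]
  exact .univ_pi fun _ ↦ uniqueDiffOn_Icc_zero_one

lemma isC1Holder_of_memHolder_fderiv {α : ℝ≥0} (hα : 0 < α) (hf : Differentiable ℝ f)
    (hf' : MemHolder α (fderiv ℝ f)) : IsC1Holder f α := by
  have heq {x} (hx : x ∈ unitSquare) : fderivWithin ℝ f unitSquare x = fderiv ℝ f x :=
    (hf x).fderivWithin (uniqueDiffOn_unitSquare x hx)
  obtain ⟨C, hC⟩ := hf'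
  refine ⟨hf.differentiableOn, (hC.continuous hα).continuousOn.congr fun x ↦ heq, C,
    fun x hx y hy ↦ ?_⟩
  rw [heq hx, heq hy, ← dist_eq_norm]
  exact hC.dist_le x y

lemma mem_critSet_of_hasFDerivAt_zero {x : EuclideanSpace ℝ (Fin 2)} (hx : x ∈ unitSquare)
    (hf : HasFDerivAt f (0 : EuclideanSpace ℝ (Fin 2) →L[ℝ] ℝ) x) : x ∈ critSet f :=
  ⟨hx, .inr (hf.hasFDerivWithinAt.fderivWithin (uniqueDiffOn_unitSquare x hx))⟩

end UnitSquare

section SardFunction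

/-- The counterexample: on the product of two Cantor sets it evaluates a base-four expansion whose
digits interleave those of the two coordinates. -/
def sardFunction (x : EuclideanSpace ℝ (Fin 2)) : ℝ :=
  ∑ i, switchSeries (digitWeight i) cantorSpacing cantorGap (x i)

lemma differentiable_switchSeries_digitWeight (i : Fin 2) :
    Differentiable ℝ (switchSeries (digitWeight i) cantorSpacing cantorGap) := fun x ↦
  (hasDerivAt_switchSeries (digitWeight_nonneg i) cantorGap_pos isCantorScale_cantorSpacing.gap_le
    (hasSum_digitWeight i).summable (summable_digitWeight_mul_inv_cantorGap i) x).differentiableAt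

lemma differentiable_sardFunction : Differentiable ℝ sardFunction := fun x ↦
  (hasFDerivAt_sum_apply fun i ↦ differentiable_switchSeries_digitWeight i (x i)).differentiableAt

lemma memHolder_fderiv_sardFunction {α : ℝ≥0} (hα : α < 1) :
    MemHolder α (fderiv ℝ sardFunction) :=
  memHolder_fderiv_sum_apply differentiable_switchSeries_digitWeight fun i ↦
    memHolder_deriv_switchSeries (digitWeight_nonneg i) cantorGap_pos
      isCantorScale_cantorSpacing.gap_le (hasSum_digitWeight i).summable
      (summable_digitWeight_mul_inv_cantorGap i) hα.le
      (summable_digitWeight_mul_inv_cantorGap_rpow i α.coe_nonneg (mod_cast hα))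

lemma sardFunction_mem_Icc (x : EuclideanSpace ℝ (Fin 2)) : sardFunction x ∈ Icc 0 1 := by
  have h (i : Fin 2) : switchSeries (digitWeight i) cantorSpacing cantorGap (x i) ∈
      Icc 0 (2 ^ (i : ℕ) / 3) :=
    (hasSum_digitWeight i).tsum_eq ▸
      switchSeries_mem_Icc (digitWeight_nonneg i) (hasSum_digitWeight i).summable (x i)
  refine ⟨Finset.sum_nonneg fun i _ ↦ (h i).1, (Finset.sum_le_sum fun i _ ↦ (h i).2).trans_eq ?_⟩
  norm_num [Fin.sum_univ_two]

lemma cantorPoint_mem_critSet_sardFunction (a : Fin 2 → ℕ → Fin 2) :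
    WithLp.toLp 2 (fun i ↦ cantorPoint cantorSpacing (a i)) ∈ critSet sardFunction := by
  refine mem_critSet_of_hasFDerivAt_zero (fun i ↦ cantorPoint_cantorSpacing_mem_Icc (a i)) ?_
  refine (hasFDerivAt_sum_apply fun i ↦
    differentiable_switchSeries_digitWeight i _).congr_fderiv (Finset.sum_eq_zero fun i _ ↦ ?_)
  rw [isCantorScale_cantorSpacing.deriv_switchSeries_cantorPoint (digitWeight_nonneg i)
    (hasSum_digitWeight i).summable (summable_digitWeight_mul_inv_cantorGap i), zero_smul]

lemma Ico_subset_image_critSet_sardFunction : Ico 0 1 ⊆ sardFunction '' critSet sardFunction := by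
  intro t ht
  obtain ⟨a, rfl⟩ := exists_digits_tsum_eq ht
  refine ⟨_, cantorPoint_mem_critSet_sardFunction a, ?_⟩
  simp only [sardFunction, isCantorScale_cantorSpacing.switchSeries_cantorPoint]

lemma volume_image_critSet_sardFunction : volume (sardFunction '' critSet sardFunction) = 1 := by
  apply le_antisymm
  · calc volume (sardFunction '' critSet sardFunction) ≤ volume (Icc (0 : ℝ) 1) :=
          measure_mono (image_subset_iff.mpr fun x _ ↦ sardFunction_mem_Icc x)
      _ = 1 := by simp
  · calc 1 = volume (Ico (0 : ℝ) 1) := by simp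
      _ ≤ _ := measure_mono Ico_subset_image_critSet_sardFunction

end SardFunction

/-- There exists `f : [0,1]² → ℝ` of class `C^{1,α}` for every `α ∈ (0,1)` without the
strong Sard property; in fact `L¹(f(S)) = 1` where `S` is the critical set of `f`. -/
theorem exists_C1Holder_not_strongSard :
    ∃ f : EuclideanSpace ℝ (Fin 2) → ℝ,
      (∀ α ∈ Set.Ioo (0:ℝ) 1, IsC1Holder f α) ∧
      volume (f '' critSet f) = 1 := by
  refine ⟨sardFunction, fun α hα ↦ ?_, volume_image_critSet_sardFunction⟩
  lift α to ℝ≥0 using hα.1.le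
  exact isC1Holder_of_memHolder_fderiv (mod_cast hα.1) differentiable_sardFunction
    (memHolder_fderiv_sardFunction (mod_cast hα.2))
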